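/- Let v, q : ℕ → [0,∞) be sequences, let ε > 0, let d be a positive integer, and let B be a constant such that v(t_0 + d) − v(t_0) ≤ d·(B − ε·q(t_0)) for every t_0 ∈ ℕ. Then limsup_{t→∞} (1/t)·Σ_{τ=0}^{t−1} q(τ) ≤ B/ε. -/

import Mathlib

/-!
The window sum `W t = ∑_{i<d} v (t + i)` satisfies `W (t+1) - W t = v (t+d) - v t`, so the `d`-step
drift hypothesis on `v` is a one-step drift bound for `W`. Telescoping it (`window_drift`) gives
`W t + d ε ∑_{τ<t} q τ ≤ d B t + W 0`. As `W t ≥ 0`, dividing by `d ε t` bounds the time average of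
`q` by `B / ε + (W 0 / (d ε)) / t`, which tends to `B / ε`.
-/

/-- Telescoped drift inequality for the window sum `∑_{i<d} v (t + i)`. -/
lemma window_drift (v q : ℕ → ℝ) (ε : ℝ) (d : ℕ) (B : ℝ)
    (h : ∀ t0 : ℕ, v (t0 + d) - v t0 ≤ (d : ℝ) * (B - ε * q t0)) (t : ℕ) :
    ∑ i ∈ Finset.range d, v (t + i) + d * ε * ∑ τ ∈ Finset.range t, q τ
      ≤ d * B * t + ∑ i ∈ Finset.range d, v i := by
  induction t with
  | zero => simp
  | succ t ih =>
    have h1 := Finset.sum_range_succ (fun i => v (t + i)) d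
    have h2 := Finset.sum_range_succ' (fun i => v (t + i)) d
    have h3 : ∀ i, t + 1 + i = t + (i + 1) := fun i => by omega
    simp only [h3, Finset.sum_range_succ _ t, add_zero] at *
    push_cast
    linarith [h t]

/-- Let `v, q : ℕ → [0,∞)`, `ε > 0`, `d` a positive integer and `B` a constant with
`v(t₀+d) − v(t₀) ≤ d·(B − ε·q(t₀))` for every `t₀ ∈ ℕ`. Then
`limsup_{t→∞} (1/t)·∑_{τ=0}^{t−1} q(τ) ≤ B/ε`. -/
theorem stmt_10
    (v q : ℕ → ℝ) (hv : ∀ n, 0 ≤ v n) (hq : ∀ n, 0 ≤ q n)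
    (ε : ℝ) (hε : 0 < ε) (d : ℕ) (hd : 0 < d) (B : ℝ)
    (h : ∀ t0 : ℕ, v (t0 + d) - v t0 ≤ (d : ℝ) * (B - ε * q t0)) :
    Filter.atTop.limsup
      (fun t : ℕ => (1 / (t : ℝ)) * ∑ τ ∈ Finset.range t, q τ) ≤ B / ε := by
  have hd' : (0 : ℝ) < d := by exact_mod_cast hd
  set C := ∑ i ∈ Finset.range d, v i with hC
  have hlim : Filter.Tendsto (fun t : ℕ => B / ε + C / (d * ε) / (t : ℝ)) Filter.atTop
      (nhds (B / ε)) := by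
    simpa using (tendsto_const_div_atTop_nhds_zero_nat (C / (d * ε))).const_add (B / ε)
  rw [← hlim.limsup_eq]
  -- The limsup of reals is monotone only given boundedness: below by `0`, above by convergence.
  refine Filter.limsup_le_limsup ?_ ?_ hlim.isBoundedUnder_le
  · filter_upwards [Filter.eventually_gt_atTop 0] with t ht
    have ht' : (0 : ℝ) < t := by exact_mod_cast ht
    have hW : 0 ≤ ∑ i ∈ Finset.range d, v (t + i) := Finset.sum_nonneg fun i _ => hv _
    have key := window_drift v q ε d B h t
    have e : B / ε + C / (d * ε) / (t : ℝ) = (d * B * t + C) / (d * ε * t) := by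
      field_simp
    rw [e, le_div_iff₀ (by positivity)]
    have e2 : 1 / (t : ℝ) * (∑ τ ∈ Finset.range t, q τ) * (d * ε * t)
        = d * ε * ∑ τ ∈ Finset.range t, q τ := by
      field_simp
    rw [e2]
    linarith
  · refine Filter.IsBoundedUnder.isCoboundedUnder_le ⟨0, ?_⟩
    refine Filter.eventually_map.2 (Filter.Eventually.of_forall fun t => ?_)
    exact mul_nonneg (by positivity) (Finset.sum_nonneg fun i _ => hq i)
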